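/- A stationary symmetric Markov process is reflection positive about every time point: if x_t is a Markov process whose finite-dimensional distributions are invariant under all time translations t ↦ t + τ and under time reflection t ↦ −t, then for every a ∈ ℝ, every finite set of times t₁,...,t_n > a, and every bounded measurable complex F, E[F(x(t₁),...,x(t_n)) · conj(F(x(2a−t₁),...,x(2a−t_n)))] ≥ 0. -/

import Mathlib

/-!
Let `θ t = 2a - t`. By the Markov property an observable `F` of the times `t ≥ a` can be replaced,
inside `E[F ⋅ G]` with `G` an observable of the times `t ≤ a`, by a function `H` of `x a` alone: the
future values are integrated out one at a time, the latest first. Stationarity and symmetry make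
the law of the path invariant under `θ`, and `θ` fixes `a`. Hence
`E[F ⋅ conj (F ∘ θ)] = E[H ⋅ conj (F ∘ θ)] = E[H ⋅ conj F] = conj E[F ⋅ conj H] = E[|H|²] ≥ 0`.
-/

open MeasureTheory ProbabilityTheory Set
open scoped ComplexOrder

section ConditionalLaw

variable {Ω α β E : Type*} [MeasurableSpace Ω] [MeasurableSpace α] [mβ : MeasurableSpace β]
  [MeasurableSpace E] [StandardBorelSpace E] [Nonempty E] {μ : Measure Ω} [IsFiniteMeasure μ]
  {Y : Ω → α} {Z : Ω → E} {f : α → β}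

theorem map_prodMk_eq_compProd_condDistrib_comp (hY : Measurable Y) (hZ : Measurable Z)
    (hf : Measurable f)
    (h : ∀ B, MeasurableSet B →
      μ⟦Z ⁻¹' B | .comap Y ‹_›⟧ =ᵐ[μ] μ⟦Z ⁻¹' B | mβ.comap (f ∘ Y)⟧) :
    μ.map (fun ω ↦ (Y ω, Z ω)) = μ.map Y ⊗ₘ (condDistrib Z (f ∘ Y) μ).comap f hf := by
  refine Measure.ext_prod fun {A B} hA hB ↦ ?_
  have hκ : ∀ᵐ ω ∂μ, condDistrib Z Y μ (Y ω) B = condDistrib Z (f ∘ Y) μ (f (Y ω)) B := by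
    filter_upwards [condDistrib_ae_eq_condExp hY hZ hB, h B hB,
      condDistrib_ae_eq_condExp (hf.comp hY) hZ hB] with ω hω hω' hω''
    exact (measureReal_eq_measureReal_iff).1 (hω.trans (hω'.trans hω''.symm))
  rw [← compProd_map_condDistrib hZ.aemeasurable, Measure.compProd_apply_prod hA hB,
    Measure.compProd_apply_prod hA hB, setLIntegral_map hA (Kernel.measurable_coe _ hB) hY,
    setLIntegral_map hA (Kernel.measurable_coe _ hB) hY]
  exact lintegral_congr_ae (ae_restrict_of_ae hκ)

theorem integral_prodMk_eq_integral_condDistrib_comp {F : Type*} [NormedAddCommGroup F]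
    [NormedSpace ℝ F] (hY : Measurable Y) (hZ : Measurable Z)
    (hf : Measurable f)
    (h : ∀ B, MeasurableSet B →
      μ⟦Z ⁻¹' B | .comap Y ‹_›⟧ =ᵐ[μ] μ⟦Z ⁻¹' B | mβ.comap (f ∘ Y)⟧)
    {Φ : α × E → F} (hΦ : StronglyMeasurable Φ) (hint : Integrable (fun ω ↦ Φ (Y ω, Z ω)) μ) :
    ∫ ω, Φ (Y ω, Z ω) ∂μ = ∫ ω, ∫ z, Φ (Y ω, z) ∂condDistrib Z (f ∘ Y) μ (f (Y ω)) ∂μ := by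
  have hYZ : AEMeasurable (fun ω ↦ (Y ω, Z ω)) μ := (hY.prodMk hZ).aemeasurable
  have hlaw := map_prodMk_eq_compProd_condDistrib_comp hY hZ hf h
  have hint' := (integrable_map_measure hΦ.aestronglyMeasurable hYZ).2 hint
  rw [hlaw] at hint'
  rw [← integral_map hYZ hΦ.aestronglyMeasurable, hlaw, Measure.integral_compProd hint',
    integral_map hY.aemeasurable hΦ.integral_kernel_prod_right'.aestronglyMeasurable]
  rfl

end ConditionalLaw

section CylinderFunction

variable {T E 𝕜 : Type*} [MeasurableSpace E] [RCLike 𝕜] {A B : Set T} {F G : (T → E) → 𝕜}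

/-- Bounded measurable functions of the path that depend on only finitely many coordinates, all of
them in `A`: the observables of the process at times in `A`. -/
structure IsCylinderFunction (A : Set T) (F : (T → E) → 𝕜) : Prop where
  measurable : Measurable F
  exists_norm_le : ∃ C, ∀ y, ‖F y‖ ≤ C
  exists_dependsOn : ∃ S : Finset T, ↑S ⊆ A ∧ DependsOn F S

namespace IsCylinderFunction

theorem mono (hF : IsCylinderFunction A F) (hAB : A ⊆ B) : IsCylinderFunction B F :=
  let ⟨S, hS, hFS⟩ := hF.exists_dependsOn
  ⟨hF.measurable, hF.exists_norm_le, S, hS.trans hAB, hFS⟩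

theorem dependsOn (hF : IsCylinderFunction A F) : DependsOn F A :=
  let ⟨_, hS, hFS⟩ := hF.exists_dependsOn
  hFS.mono hS

theorem mul (hF : IsCylinderFunction A F) (hG : IsCylinderFunction A G) :
    IsCylinderFunction A fun y ↦ F y * G y := by
  classical
  obtain ⟨C, hC⟩ := hF.exists_norm_le
  obtain ⟨D, hD⟩ := hG.exists_norm_le
  obtain ⟨S, hSA, hFS⟩ := hF.exists_dependsOn
  obtain ⟨S', hSA', hGS'⟩ := hG.exists_dependsOn
  refine ⟨hF.measurable.mul hG.measurable, ⟨C * D, fun y ↦ norm_mul_le_of_le (hC y) (hD y)⟩,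
    S ∪ S', by simp [hSA, hSA'], fun y y' h ↦ ?_⟩
  simp only [Finset.coe_union, mem_union] at h
  exact congrArg₂ _ (hFS fun t ht ↦ h t (.inl ht)) (hGS' fun t ht ↦ h t (.inr ht))

theorem conj (hF : IsCylinderFunction A F) : IsCylinderFunction A fun y ↦ starRingEnd 𝕜 (F y) :=
  let ⟨S, hSA, hFS⟩ := hF.exists_dependsOn
  ⟨RCLike.continuous_conj.measurable.comp hF.measurable, by simpa using hF.exists_norm_le,
    S, hSA, fun _ _ h ↦ congrArg _ (hFS h)⟩

theorem comp_reindex {θ : T → T} (hF : IsCylinderFunction A F) (hθ : MapsTo θ A B) :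
    IsCylinderFunction B fun y ↦ F fun t ↦ y (θ t) := by
  classical
  obtain ⟨C, hC⟩ := hF.exists_norm_le
  obtain ⟨S, hSA, hFS⟩ := hF.exists_dependsOn
  refine ⟨hF.measurable.comp (by fun_prop), ⟨C, fun y ↦ hC _⟩, S.image θ, ?_, fun y y' h ↦ ?_⟩
  · rw [Finset.coe_image]
    exact (hθ.mono_left hSA).image_subset
  · exact hFS fun t ht ↦ h _ (Finset.mem_coe.2 (Finset.mem_image_of_mem θ ht))

end IsCylinderFunction

theorem isCylinderFunction_comp_eval {ι : Type*} [Finite ι] {t : ι → T} (ht : ∀ i, t i ∈ A)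
    {F : (ι → E) → 𝕜} (hF : Measurable F) (hbdd : ∃ C, ∀ y, ‖F y‖ ≤ C) :
    IsCylinderFunction A fun y : T → E ↦ F fun i ↦ y (t i) := by
  obtain ⟨C, hC⟩ := hbdd
  refine ⟨hF.comp (by fun_prop), ⟨C, fun y ↦ hC _⟩, (finite_range t).toFinset, ?_, fun y y' h ↦ ?_⟩
  · simpa [range_subset_iff] using ht
  · exact congrArg F (funext fun i ↦ h (t i) (by simp))

variable [DecidableEq T] {κ : Kernel E E} {b c : T}

/-- One step of the backward recursion: the value at time `c` is averaged out with the transition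
kernel `κ`, started from the value at time `b`. -/
noncomputable def integrateOut (κ : Kernel E E) (b c : T) (F : (T → E) → 𝕜) (y : T → E) : 𝕜 :=
  ∫ z, F (Function.update y c z) ∂κ (y b)

theorem isCylinderFunction_integrateOut [IsMarkovKernel κ] (hb : b ∈ A)
    (hF : IsCylinderFunction (insert c A) F) : IsCylinderFunction A (integrateOut κ b c F) := by
  obtain ⟨C, hC⟩ := hF.exists_norm_le
  obtain ⟨S, hSA, hFS⟩ := hF.exists_dependsOn
  refine ⟨?_, ⟨C, fun y ↦ ?_⟩, insert b (S.erase c), ?_, fun y y' h ↦ ?_⟩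
  · have hFupd : Measurable fun p : (T → E) × E ↦ F (Function.update p.1 c p.2) :=
      hF.measurable.comp measurable_update'
    exact (hFupd.stronglyMeasurable.integral_kernel_prod_right'
      (κ := κ.comap (fun y : T → E ↦ y b) (measurable_pi_apply b))).measurable
  · simpa [integrateOut] using norm_integral_le_of_norm_le_const (μ := κ (y b))
      (f := fun z ↦ F (Function.update y c z)) (.of_forall fun z ↦ hC _)
  · rw [Finset.coe_insert, Finset.coe_erase]
    exact insert_subset hb (sdiff_singleton_subset_iff.2 hSA)
  · have hupd (z : E) : F (Function.update y c z) = F (Function.update y' c z) := by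
      refine hFS fun s hs ↦ ?_
      obtain rfl | hsc := eq_or_ne s c
      · simp
      · simpa [hsc] using h s (by simp [hsc, Finset.mem_coe.1 hs])
    simp only [integrateOut, hupd, h b (by simp)]

theorem integrateOut_mul_of_dependsOn (hG : DependsOn G A) (hc : c ∉ A) (y : T → E) :
    integrateOut κ b c (fun y ↦ F y * G y) y = integrateOut κ b c F y * G y := by
  have hupd (z : E) : G (Function.update y c z) = G y :=
    hG fun s hs ↦ Function.update_of_ne (ne_of_mem_of_not_mem hs hc) z y
  simp only [integrateOut, hupd, integral_mul_const]

end CylinderFunction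

section Markov

variable {T Ω E : Type*} [LinearOrder T] [MeasurableSpace Ω] [mE : MeasurableSpace E]
  {μ : Measure Ω} {x : T → Ω → E}

/-- The Markov property of the process `x` under `μ`: for a finite set `S` of times with last
element `b`, the conditional distribution of a value after time `b` given the values at the times
in `S` is its conditional distribution given the value at time `b`. -/
def IsMarkovProcess (μ : Measure Ω) (x : T → Ω → E) : Prop :=
  ∀ ⦃S : Finset T⦄ ⦃b c : T⦄, IsGreatest (S : Set T) b → b < c → ∀ ⦃B : Set E⦄, MeasurableSet B →
    μ⟦x c ⁻¹' B | .comap (fun ω ↦ S.restrict (x · ω)) .pi⟧ =ᵐ[μ] μ⟦x c ⁻¹' B | .comap (x b) mE⟧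

theorem isMarkovProcess_of_strictMono
    (hMarkov : ∀ (n : ℕ) (t : Fin (n + 2) → T), StrictMono t →
      ∀ g : E → ℝ, Measurable g → (∃ C, ∀ y, |g y| ≤ C) →
      μ[(fun ω ↦ g (x (t (Fin.last (n + 1))) ω)) |
          .comap (fun ω ↦ fun i : Fin (n + 1) ↦ x (t i.castSucc) ω) .pi]
        =ᵐ[μ]
      μ[(fun ω ↦ g (x (t (Fin.last (n + 1))) ω)) | .comap (x (t (Fin.last n).castSucc)) mE]) :
    IsMarkovProcess μ x := by
  intro S b c hb hbc B hB
  obtain ⟨n, hn⟩ : ∃ n, S.card = n + 1 :=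
    Nat.exists_eq_succ_of_ne_zero (Finset.card_ne_zero_of_mem hb.1)
  let e := S.orderIsoOfFin hn
  let t : Fin (n + 2) → T := Fin.snoc (α := fun _ ↦ T) (fun i ↦ (e i : T)) c
  have ht_castSucc (i : Fin (n + 1)) : t i.castSucc = e i := by simp [t]
  have ht_last : t (Fin.last (n + 1)) = c := by simp [t]
  have hmono : StrictMono t := by
    refine Fin.strictMono_iff_lt_succ.2 fun i ↦ ?_
    cases i using Fin.lastCases with
    | last =>
      rw [Fin.succ_last, ht_last, ht_castSucc]
      exact (hb.2 (e _).2).trans_lt hbc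
    | cast i =>
      rw [Fin.succ_castSucc, ht_castSucc, ht_castSucc]
      exact e.strictMono Fin.castSucc_lt_succ
  have hpresent : t (Fin.last n).castSucc = b := by
    rw [ht_castSucc]
    refine le_antisymm (hb.2 (e _).2) ?_
    simpa using! e.monotone (Fin.le_last (e.symm ⟨b, hb.1⟩))
  have hpast : MeasurableSpace.comap (fun ω ↦ S.restrict (x · ω)) .pi
      = .comap (fun ω ↦ fun i : Fin (n + 1) ↦ x (t i.castSucc) ω) .pi := by
    simp only [MeasurableSpace.pi, MeasurableSpace.comap_iSup, MeasurableSpace.comap_comp,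
      ← Equiv.iSup_comp e.toEquiv, ht_castSucc]
    rfl
  have hind := hMarkov n t hmono (B.indicator fun _ ↦ 1) (measurable_const.indicator hB)
    ⟨1, fun y ↦ by by_cases hy : y ∈ B <;> simp [hy]⟩
  rw [← hpast, ht_last, hpresent] at hind
  exact hind

namespace IsMarkovProcess

variable [StandardBorelSpace E] [Nonempty E] [IsFiniteMeasure μ] {𝕜 : Type*} [RCLike 𝕜]
  {F : (T → E) → 𝕜} {a b c : T}

theorem integral_eq_integral_integrateOut (hM : IsMarkovProcess μ x) (hx : ∀ t, Measurable (x t))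
    (hbc : b < c) (hF : IsCylinderFunction (insert c (Iic b)) F) :
    ∫ ω, F (x · ω) ∂μ
      = ∫ ω, integrateOut (condDistrib (x c) (x b) μ) b c F (x · ω) ∂μ := by
  obtain ⟨C, hC⟩ := hF.exists_norm_le
  obtain ⟨S', hS', hFS'⟩ := hF.exists_dependsOn
  let S := insert b (S'.erase c)
  have hSb : (S : Set T) ⊆ Iic b := by
    rw [Finset.coe_insert, Finset.coe_erase]
    exact insert_subset self_mem_Iic (sdiff_singleton_subset_iff.2 hS')
  have hb : IsGreatest (S : Set T) b := ⟨Finset.mem_insert_self _ _, hSb⟩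
  obtain ⟨e⟩ := ‹Nonempty E›
  let path (p : (S → E) × E) : T → E :=
    Function.update (Function.updateFinset (fun _ ↦ e) S p.1) c p.2
  have hpath : Measurable path :=
    measurable_update'.comp ((measurable_updateFinset.comp measurable_fst).prodMk measurable_snd)
  have hFpath (y : T → E) (z : E) : F (path (S.restrict y, z)) = F (Function.update y c z) := by
    refine hFS' fun s hs ↦ ?_
    obtain rfl | hsc := eq_or_ne s c
    · simp [path]
    · have hsS : s ∈ S := by simp [S, hsc, Finset.mem_coe.1 hs]
      simp [path, hsc, Function.updateFinset, hsS]
  have hX : Measurable fun ω ↦ S.restrict (x · ω) := measurable_pi_lambda _ fun i ↦ hx i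
  have hcond := integral_prodMk_eq_integral_condDistrib_comp (f := fun y : S → E ↦ y ⟨b, hb.1⟩)
    hX (hx c) (measurable_pi_apply _) (fun B hB ↦ hM hb hbc hB)
    (hF.measurable.comp hpath).stronglyMeasurable
    (.of_bound ((hF.measurable.comp hpath).comp (hX.prodMk (hx c))).aestronglyMeasurable C
      (.of_forall fun _ ↦ hC _))
  simpa only [Function.comp_def, hFpath, Function.update_eq_self] using! hcond

theorem exists_integral_mul_eq (hM : IsMarkovProcess μ x) (hx : ∀ t, Measurable (x t))
    (hF : IsCylinderFunction (Ici a) F) :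
    ∃ H : (T → E) → 𝕜, IsCylinderFunction {a} H ∧ ∀ G : (T → E) → 𝕜, IsCylinderFunction (Iic a) G →
      ∫ ω, F (x · ω) * G (x · ω) ∂μ = ∫ ω, H (x · ω) * G (x · ω) ∂μ := by
  obtain ⟨S, hSa, hFS⟩ := hF.exists_dependsOn
  replace hF : IsCylinderFunction (insert a (S : Set T)) F :=
    ⟨hF.measurable, hF.exists_norm_le, S, subset_insert _ _, hFS⟩
  clear hFS
  induction S using Finset.induction_on_max generalizing F with
  | empty => exact ⟨F, by simpa using hF, fun _ _ ↦ rfl⟩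
  | insert c S hc ih =>
    obtain rfl | hac : a = c ∨ a < c := eq_or_lt_of_le (hSa (by simp))
    · exact ih ((Finset.coe_subset.2 (Finset.subset_insert _ _)).trans hSa) (by simpa using hF)
    obtain ⟨b, hb⟩ : ∃ b, IsGreatest ((insert a S : Finset T) : Set T) b :=
      ⟨_, Finset.isGreatest_max' _ (Finset.insert_nonempty a S)⟩
    have hab : a ≤ b := hb.2 (Finset.mem_insert_self a S)
    have hbc : b < c := (Finset.mem_insert.1 hb.1).elim (fun h ↦ h ▸ hac) (hc b)
    rw [Finset.coe_insert, insert_comm, ← Finset.coe_insert] at hF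
    let κ := condDistrib (x c) (x b) μ
    obtain ⟨H, hH, hHG⟩ := ih (F := integrateOut κ b c F)
      ((Finset.coe_subset.2 (Finset.subset_insert _ _)).trans hSa)
      (by simpa using isCylinderFunction_integrateOut hb.1 hF)
    refine ⟨H, hH, fun G hG ↦ Eq.trans ?_ (hHG G hG)⟩
    have hGb : IsCylinderFunction (Iic b) G := hG.mono (Iic_subset_Iic.2 hab)
    rw [hM.integral_eq_integral_integrateOut hx hbc
      ((hF.mono (insert_subset_insert hb.2)).mul (hGb.mono (subset_insert _ _)))]
    simp only [integrateOut_mul_of_dependsOn hGb.dependsOn hbc.not_ge, κ]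

theorem integral_mul_conj_reflection_nonneg (hM : IsMarkovProcess μ x)
    (hx : ∀ t, Measurable (x t)) {θ : T → T} (hθa : θ a = a) (hθ : MapsTo θ (Ici a) (Iic a))
    (hinv : IdentDistrib (fun ω t ↦ x (θ t) ω) (fun ω t ↦ x t ω) μ μ)
    (hF : IsCylinderFunction (Ici a) F) :
    0 ≤ ∫ ω, F (x · ω) * starRingEnd 𝕜 (F fun t ↦ x (θ t) ω) ∂μ := by
  obtain ⟨H, hH, hFH⟩ := hM.exists_integral_mul_eq hx hF
  have hHθ (ω : Ω) : H (x · ω) = H fun t ↦ x (θ t) ω := hH.dependsOn (by simp [hθa])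
  calc
    0 ≤ ((∫ ω, ‖H (x · ω)‖ ^ 2 ∂μ : ℝ) : 𝕜) :=
      RCLike.ofReal_nonneg.2 (integral_nonneg fun ω ↦ by positivity)
    _ = starRingEnd 𝕜 (∫ ω, H (x · ω) * starRingEnd 𝕜 (H (x · ω)) ∂μ) := by
      simp only [RCLike.mul_conj, ← RCLike.ofReal_pow, integral_ofReal, RCLike.conj_ofReal]
    _ = starRingEnd 𝕜 (∫ ω, F (x · ω) * starRingEnd 𝕜 (H (x · ω)) ∂μ) := by
      rw [hFH _ (hH.mono (singleton_subset_iff.2 self_mem_Iic)).conj]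
    _ = ∫ ω, H (x · ω) * starRingEnd 𝕜 (F (x · ω)) ∂μ := by
      rw [← integral_conj]
      simp only [map_mul, RCLike.conj_conj, mul_comm]
    _ = ∫ ω, H (x · ω) * starRingEnd 𝕜 (F fun t ↦ x (θ t) ω) ∂μ := by
      simpa only [← hHθ, Function.comp_def, Pi.mul_apply] using
        (hinv.comp (hH.measurable.mul hF.conj.measurable)).integral_eq.symm
    _ = ∫ ω, F (x · ω) * starRingEnd 𝕜 (F fun t ↦ x (θ t) ω) ∂μ :=
      (hFH _ (hF.comp_reindex hθ).conj).symm

end IsMarkovProcess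

end Markov

section FiniteDimensionalLaws

variable {T Ω E : Type*} [MeasurableSpace Ω] [MeasurableSpace E] {μ : Measure Ω}
  [IsFiniteMeasure μ] {X Y : T → Ω → E}

theorem identDistrib_path_of_forall_fin (hX : ∀ t, Measurable (X t)) (hY : ∀ t, Measurable (Y t))
    (h : ∀ (n : ℕ) (t : Fin n → T),
      μ.map (fun ω i ↦ X (t i) ω) = μ.map (fun ω i ↦ Y (t i) ω)) :
    IdentDistrib (fun ω t ↦ X t ω) (fun ω t ↦ Y t ω) μ μ := by
  refine (identDistrib_iff_forall_finset_identDistrib (measurable_pi_lambda _ hX).aemeasurable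
    (measurable_pi_lambda _ hY).aemeasurable).2 fun S ↦ ?_
  have hfin : IdentDistrib (fun ω i ↦ X (S.equivFin.symm i) ω)
      (fun ω i ↦ Y (S.equivFin.symm i) ω) μ μ := ⟨by fun_prop, by fun_prop, h _ _⟩
  have hrelabel : Measurable fun (y : Fin S.card → E) (s : S) ↦ y (S.equivFin s) := by fun_prop
  simpa [Function.comp_def, Finset.restrict_def] using! hfin.comp hrelabel

end FiniteDimensionalLaws

theorem stationary_symmetric_markov_reflection_positive_everywhere_general
    {T Ω E 𝕜 : Type*} [AddCommGroup T] [LinearOrder T] [IsOrderedAddMonoid T] [RCLike 𝕜]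
    [MeasurableSpace Ω] [mE : MeasurableSpace E] [StandardBorelSpace E] [Nonempty E]
    (μ : Measure Ω) [IsFiniteMeasure μ] (x : T → Ω → E) (hmeas : ∀ t, Measurable (x t))
    (hstat : ∀ (τ : T) (n : ℕ) (t : Fin n → T),
      μ.map (fun ω i ↦ x (t i + τ) ω) = μ.map (fun ω i ↦ x (t i) ω))
    (hsym : ∀ (n : ℕ) (t : Fin n → T),
      μ.map (fun ω i ↦ x (t i) ω) = μ.map (fun ω i ↦ x (-(t i)) ω))
    (hMarkov : ∀ (n : ℕ) (t : Fin (n + 2) → T), StrictMono t →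
      ∀ g : E → ℝ, Measurable g → (∃ C, ∀ y, |g y| ≤ C) →
      μ[(fun ω ↦ g (x (t (Fin.last (n + 1))) ω)) |
          .comap (fun ω ↦ fun i : Fin (n + 1) ↦ x (t i.castSucc) ω) .pi]
        =ᵐ[μ]
      μ[(fun ω ↦ g (x (t (Fin.last (n + 1))) ω)) | .comap (x (t (Fin.last n).castSucc)) mE])
    (a : T) {ι : Type*} [Finite ι] (t : ι → T) (ht : ∀ i, a ≤ t i)
    (F : (ι → E) → 𝕜) (hF : Measurable F) (hbdd : ∃ C, ∀ y, ‖F y‖ ≤ C) :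
    0 ≤ ∫ ω, F (fun i ↦ x (t i) ω) * starRingEnd 𝕜 (F fun i ↦ x (2 • a - t i) ω) ∂μ := by
  have hinv : IdentDistrib (fun ω t ↦ x (2 • a - t) ω) (fun ω t ↦ x t ω) μ μ :=
    identDistrib_path_of_forall_fin (fun t ↦ hmeas _) hmeas fun n t ↦ by
      simpa only [neg_add_eq_sub] using
        (hstat (2 • a) n fun i ↦ -t i).trans (hsym n t).symm
  have hθ : MapsTo (2 • a - ·) (Ici a) (Iic a) := fun s hs ↦ by
    rw [mem_Iic, two_nsmul, sub_le_iff_le_add]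
    exact add_le_add_right hs a
  exact (isMarkovProcess_of_strictMono hMarkov).integral_mul_conj_reflection_nonneg hmeas
    (by rw [two_nsmul, add_sub_cancel_right]) hθ hinv (isCylinderFunction_comp_eval ht hF hbdd)

/-- A stationary symmetric Markov process is reflection positive about every time point:
if the finite-dimensional distributions of `x` are invariant under all time translations
and under time reflection, and `x` has the Markov property, then for every `a ∈ ℝ`,
all times `t₁,…,tₙ > a`, and every bounded measurable complex `F`,
`E[F(x(t₁),…,x(tₙ)) ⋅ conj (F(x(2a-t₁),…,x(2a-tₙ)))] ≥ 0`. -/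
theorem stationary_symmetric_markov_reflection_positive_everywhere
    {Ω : Type*} [MeasurableSpace Ω] (μ : Measure Ω) [IsProbabilityMeasure μ]
    (x : ℝ → Ω → ℝ) (hmeas : ∀ t, Measurable (x t))
    (hstat : ∀ (τ : ℝ) (n : ℕ) (t : Fin n → ℝ),
      Measure.map (fun ω => fun i => x (t i + τ) ω) μ
        = Measure.map (fun ω => fun i => x (t i) ω) μ)
    (hsym : ∀ (n : ℕ) (t : Fin n → ℝ),
      Measure.map (fun ω => fun i => x (t i) ω) μ
        = Measure.map (fun ω => fun i => x (-(t i)) ω) μ)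
    (hMarkov : ∀ (n : ℕ) (t : Fin (n + 2) → ℝ), StrictMono t →
      ∀ g : ℝ → ℝ, Measurable g → (∃ C, ∀ y, |g y| ≤ C) →
      μ[(fun ω => g (x (t (Fin.last (n + 1))) ω)) |
          MeasurableSpace.comap (fun ω => fun i : Fin (n + 1) => x (t i.castSucc) ω)
            MeasurableSpace.pi]
        =ᵐ[μ]
      μ[(fun ω => g (x (t (Fin.last (n + 1))) ω)) |
          MeasurableSpace.comap (x (t (Fin.last n).castSucc)) (borel ℝ)]) :
    ∀ (a : ℝ) (n : ℕ) (t : Fin n → ℝ), (∀ i, a < t i) → StrictMono t →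
      ∀ F : (Fin n → ℝ) → ℂ, Measurable F → (∃ C, ∀ y, ‖F y‖ ≤ C) →
      0 ≤ ∫ ω, F (fun i => x (t i) ω)
            * (starRingEnd ℂ) (F (fun i => x (2 * a - t i) ω)) ∂μ := by
  intro a n t ht _ F hF hbdd
  simpa only [nsmul_eq_mul, Nat.cast_ofNat] using
    stationary_symmetric_markov_reflection_positive_everywhere_general μ x hmeas hstat hsym hMarkov
      a t (fun i ↦ (ht i).le) F hF hbdd
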